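/- Let n ≥ 2, let X be B or C, let A be the Cartan matrix of type X_n and ι an admissible sequence adapted to A. Then for each k ∈ [1,n−1], the set of elements of the form S_{l_p}⋯S_{l_1} x_{r,k} (p ≥ 0, r, l_1,…,l_p ≥ 1) equals the set of tableaux [j_1,…,j_k]^X_s in Tab_{X,ι} all of whose entries j_1,…,j_k lie in J_X (i.e., in type C no entry equals ovl(n+1)). -/

import Mathlib

noncomputable section

/-- The coordinate linear form `x_k` (as a coefficient vector). -/
def xc (k : ℕ) : ℕ → ℚ := fun l => if l = k then 1 else 0

/-- Cartan matrix of type `A_n`. -/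
def cartanA (_n : ℕ) (i j : ℕ) : ℤ :=
  if i = j then 2 else if i + 1 = j ∨ j + 1 = i then -1 else 0

/-- Cartan matrix of type `B_n`. -/
def cartanB (n : ℕ) (i j : ℕ) : ℤ :=
  if i = j then 2
  else if i = n ∧ j = n - 1 then -2
  else if i + 1 = j ∨ j + 1 = i then -1 else 0

/-- Cartan matrix of type `C_n`. -/
def cartanC (n : ℕ) (i j : ℕ) : ℤ :=
  if i = j then 2
  else if i = n - 1 ∧ j = n then -2
  else if i + 1 = j ∨ j + 1 = i then -1 else 0

/-- Cartan matrix of type `D_n`. -/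
def cartanD (n : ℕ) (i j : ℕ) : ℤ :=
  if i = j then 2
  else if (i = n - 1 ∧ j = n) ∨ (i = n ∧ j = n - 1) then 0
  else if (i + 1 = j ∨ j + 1 = i) ∨ (i = n ∧ j = n - 2) ∨ (i = n - 2 ∧ j = n) then -1
  else 0

/-- `ι` (with positions indexed by `k ≥ 1`) takes values in `{1,…,n}`, has no two equal
consecutive entries, and every index occurs infinitely often. -/
def Admissible (n : ℕ) (ι : ℕ → ℕ) : Prop :=
  (∀ k, 1 ≤ k → 1 ≤ ι k ∧ ι k ≤ n) ∧
  (∀ k, 1 ≤ k → ι k ≠ ι (k + 1)) ∧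
  (∀ i, 1 ≤ i → i ≤ n → ∀ N, ∃ k, N ≤ k ∧ ι k = i)

/-- `k^+`: the next position after `k` carrying the same letter. -/
def kplus (ι : ℕ → ℕ) (k : ℕ) : ℕ := sInf {l | k < l ∧ ι l = ι k}

/-- `k^-`: the previous position (`≥ 1`) carrying the same letter, `0` if none. -/
def kminus (ι : ℕ → ℕ) (k : ℕ) : ℕ := sSup {l | 0 < l ∧ l < k ∧ ι l = ι k}

/-- The linear form `β_k` (with `β_0 = 0`). -/
def beta (A : ℕ → ℕ → ℤ) (ι : ℕ → ℕ) (k : ℕ) : ℕ → ℚ :=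
  if k = 0 then 0
  else xc k + (∑ j ∈ Finset.Ioo k (kplus ι k), (A (ι k) (ι j) : ℚ) • xc j) + xc (kplus ι k)

/-- The piecewise-linear operator `S_k`. -/
def Sop (A : ℕ → ℕ → ℤ) (ι : ℕ → ℕ) (k : ℕ) (φ : ℕ → ℚ) : ℕ → ℚ :=
  if 0 < φ k then φ - φ k • beta A ι k
  else φ - φ k • beta A ι (kminus ι k)

/-- Membership in `Ξ_ι`: forms obtained from some `x_{j_0}` by finitely many operators `S_k`. -/
inductive XiMem (A : ℕ → ℕ → ℤ) (ι : ℕ → ℕ) : (ℕ → ℚ) → Prop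
  | base (k : ℕ) (hk : 1 ≤ k) : XiMem A ι (xc k)
  | step (k : ℕ) (hk : 1 ≤ k) (φ : ℕ → ℚ) (h : XiMem A ι φ) : XiMem A ι (Sop A ι k φ)

/-- The set `Ξ_ι`. -/
def Xi (A : ℕ → ℕ → ℤ) (ι : ℕ → ℕ) : Set (ℕ → ℚ) := { φ | XiMem A ι φ }

/-- Forms obtained from a set `g` of generators by finitely many operators `S_k`. -/
inductive XiMemFrom (A : ℕ → ℕ → ℤ) (ι : ℕ → ℕ) (g : Set (ℕ → ℚ)) : (ℕ → ℚ) → Prop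
  | base (φ : ℕ → ℚ) (h : φ ∈ g) : XiMemFrom A ι g φ
  | step (k : ℕ) (hk : 1 ≤ k) (φ : ℕ → ℚ) (h : XiMemFrom A ι g φ) :
      XiMemFrom A ι g (Sop A ι k φ)

/-- `ι` is adapted to the Cartan matrix `A`: for `i ≠ j` with `a_{i,j} ≠ 0`, consecutive
members of the subsequence of `ι` consisting of the letters `i`, `j` are distinct. -/
def Adapted (n : ℕ) (A : ℕ → ℕ → ℤ) (ι : ℕ → ℕ) : Prop :=
  ∀ i j, 1 ≤ i → i ≤ n → 1 ≤ j → j ≤ n → i ≠ j → A i j ≠ 0 →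
    ∀ k l, 1 ≤ k → k < l → (ι k = i ∨ ι k = j) → (ι l = i ∨ ι l = j) →
      (∀ m, k < m → m < l → ι m ≠ i ∧ ι m ≠ j) → ι k ≠ ι l

/-- Position of the first occurrence of the letter `i` in `ι`. -/
def firstOcc (ι : ℕ → ℕ) (i : ℕ) : ℕ := sInf {k | 1 ≤ k ∧ ι k = i}

/-- `p_{i,j} = 1` iff the first occurrence of `i` precedes the first occurrence of `j`. -/
def pval (ι : ℕ → ℕ) (i j : ℕ) : ℕ := if firstOcc ι i < firstOcc ι j then 1 else 0

/-- The function `P(k)` for types A, B, C (and `P(k) = 0` for `k > n`, `k ≤ 1`). -/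
def PABC (ι : ℕ → ℕ) (n k : ℕ) : ℕ :=
  if k ≤ n then ∑ t ∈ Finset.Icc 2 k, pval ι t (t - 1) else 0

/-- The function `P(k)` for type D. -/
def PD (ι : ℕ → ℕ) (n k : ℕ) : ℕ :=
  if k = n then (∑ t ∈ Finset.Icc 2 (n - 2), pval ι t (t - 1)) + pval ι n (n - 2)
  else if k ≤ n then ∑ t ∈ Finset.Icc 2 k, pval ι t (t - 1) else 0

/-- `occPos ι j s`: the position of the `s`-th occurrence of the letter `j` in `ι`
(`0` for `s = 0`). -/
def occPos (ι : ℕ → ℕ) (j : ℕ) : ℕ → ℕ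
  | 0 => 0
  | s + 1 => sInf {k | occPos ι j s < k ∧ ι k = j}

/-- The double-indexed coordinate form `x_{s,j}`, with the conventions
`x_{s,0} = x_{s,n+1} = 0` and `x_{s,j} = 0` for `s ≤ 0`. -/
def xsj (ι : ℕ → ℕ) (n : ℕ) (s : ℤ) (j : ℕ) : ℕ → ℚ :=
  if 1 ≤ s ∧ 1 ≤ j ∧ j ≤ n then xc (occPos ι j s.toNat) else 0

/-- The double-indexed form `β_{s,j}`. -/
def betasj (A : ℕ → ℕ → ℤ) (ι : ℕ → ℕ) (s : ℤ) (j : ℕ) : ℕ → ℚ :=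
  beta A ι (occPos ι j s.toNat)

/-- The double-indexed operator `S_{m,j}`. -/
def Ssj (A : ℕ → ℕ → ℤ) (ι : ℕ → ℕ) (m j : ℕ) (φ : ℕ → ℚ) : ℕ → ℚ :=
  Sop A ι (occPos ι j m) φ

/- Entries of the ordered sets `J_X` are encoded as natural numbers:
an unbarred entry `j ∈ {1,…,n}` is encoded as `j`, a barred entry `j̄` is
encoded as `2n+1-j` (so that `n̄ = n+1, …, 1̄ = 2n` and the total order of
`J_B = J_C` is the numerical order), and the extra symbol `ovl(n+1)` of
types C and D is encoded as `0`. -/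

/-- The box of type A. -/
def boxA (ι : ℕ → ℕ) (n : ℕ) (s : ℤ) (j : ℕ) : ℕ → ℚ :=
  xsj ι n (s + (PABC ι n j : ℤ)) j - xsj ι n (s + (PABC ι n (j - 1) : ℤ) + 1) (j - 1)

/-- The box of type B. -/
def boxB (ι : ℕ → ℕ) (n : ℕ) (s : ℤ) (e : ℕ) : ℕ → ℚ :=
  if e ≤ n then
    xsj ι n (s + (PABC ι n e : ℤ)) e - xsj ι n (s + (PABC ι n (e - 1) : ℤ) + 1) (e - 1)
  else
    xsj ι n (s + (PABC ι n (2 * n - e) : ℤ) + (n : ℤ) - ((2 * n + 1 - e : ℕ) : ℤ) + 1)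
        (2 * n - e)
      - xsj ι n (s + (PABC ι n (2 * n + 1 - e) : ℤ) + (n : ℤ) - ((2 * n + 1 - e : ℕ) : ℤ) + 1)
          (2 * n + 1 - e)

/-- The box of type C (`ovl(n+1)` encoded as `0`). -/
def boxC (ι : ℕ → ℕ) (n : ℕ) (s : ℤ) (e : ℕ) : ℕ → ℚ :=
  if e = 0 then xsj ι n (s + (PABC ι n n : ℤ)) n
  else if e < n then
    xsj ι n (s + (PABC ι n e : ℤ)) e - xsj ι n (s + (PABC ι n (e - 1) : ℤ) + 1) (e - 1)
  else if e = n then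
    (2 : ℚ) • xsj ι n (s + (PABC ι n n : ℤ)) n
      - xsj ι n (s + (PABC ι n (n - 1) : ℤ) + 1) (n - 1)
  else if e = n + 1 then
    xsj ι n (s + (PABC ι n (n - 1) : ℤ) + 1) (n - 1)
      - (2 : ℚ) • xsj ι n (s + (PABC ι n n : ℤ) + 1) n
  else
    xsj ι n (s + (PABC ι n (2 * n - e) : ℤ) + (n : ℤ) - ((2 * n + 1 - e : ℕ) : ℤ) + 1)
        (2 * n - e)
      - xsj ι n (s + (PABC ι n (2 * n + 1 - e) : ℤ) + (n : ℤ) - ((2 * n + 1 - e : ℕ) : ℤ) + 1)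
          (2 * n + 1 - e)

/-- The box of type D (`ovl(n+1)` encoded as `0`, `n̄` as `n+1`, `ovl(n-1)` as `n+2`). -/
def boxD (ι : ℕ → ℕ) (n : ℕ) (s : ℤ) (e : ℕ) : ℕ → ℚ :=
  if e = 0 then xsj ι n (s + (PD ι n n : ℤ)) n
  else if e ≤ n - 2 then
    xsj ι n (s + (PD ι n e : ℤ)) e - xsj ι n (s + (PD ι n (e - 1) : ℤ) + 1) (e - 1)
  else if e = n - 1 then
    xsj ι n (s + (PD ι n (n - 1) : ℤ)) (n - 1) + xsj ι n (s + (PD ι n n : ℤ)) n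
      - xsj ι n (s + (PD ι n (n - 2) : ℤ) + 1) (n - 2)
  else if e = n then
    xsj ι n (s + (PD ι n n : ℤ)) n - xsj ι n (s + (PD ι n (n - 1) : ℤ) + 1) (n - 1)
  else if e = n + 1 then
    xsj ι n (s + (PD ι n (n - 1) : ℤ)) (n - 1) - xsj ι n (s + (PD ι n n : ℤ) + 1) n
  else if e = n + 2 then
    xsj ι n (s + (PD ι n (n - 2) : ℤ) + 1) (n - 2)
      - xsj ι n (s + (PD ι n (n - 1) : ℤ) + 1) (n - 1)
      - xsj ι n (s + (PD ι n n : ℤ) + 1) n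
  else
    xsj ι n (s + (PD ι n (2 * n - e) : ℤ) + (n : ℤ) - ((2 * n + 1 - e : ℕ) : ℤ)) (2 * n - e)
      - xsj ι n (s + (PD ι n (2 * n + 1 - e) : ℤ) + (n : ℤ) - ((2 * n + 1 - e : ℕ) : ℤ))
          (2 * n + 1 - e)

/-- The column tableau `[j_1,…,j_k]_s = Σ_{i=1}^k box_{s+k-i}(j_i)`. -/
def tab (box : ℤ → ℕ → ℕ → ℚ) (s : ℤ) (k : ℕ) (j : ℕ → ℕ) : ℕ → ℚ :=
  ∑ i ∈ Finset.Icc 1 k, box (s + (k : ℤ) - (i : ℤ)) (j i)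

/-- The set `Tab_{A,ι}`. -/
def TabA (ι : ℕ → ℕ) (n : ℕ) : Set (ℕ → ℚ) :=
  { T | ∃ (k : ℕ) (s : ℤ) (j : ℕ → ℕ),
      1 ≤ k ∧ k ≤ n ∧
      (∀ i, 1 ≤ i → i ≤ k → 1 ≤ j i ∧ j i ≤ n + 1) ∧
      (∀ i, 1 ≤ i → i < k → j i < j (i + 1)) ∧
      1 - (PABC ι n k : ℤ) ≤ s ∧
      T = tab (boxA ι n) s k j }

/-- `|·|` on encoded entries of `J_B = J_C`. -/
def absJ (n e : ℕ) : ℕ := if e ≤ n then e else 2 * n + 1 - e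

/-- The set `Tab_{B,ι}`. -/
def TabB (ι : ℕ → ℕ) (n : ℕ) : Set (ℕ → ℚ) :=
  { T | ∃ (k : ℕ) (s : ℤ) (j : ℕ → ℕ),
      1 ≤ k ∧ k ≤ n ∧
      (∀ i, 1 ≤ i → i ≤ k → 1 ≤ j i ∧ j i ≤ 2 * n) ∧
      (∀ i, 1 ≤ i → i < k → j i < j (i + 1)) ∧
      (k = n → ∀ l m, 1 ≤ l → l < m → m ≤ k → absJ n (j l) ≠ absJ n (j m)) ∧
      1 - (PABC ι n k : ℤ) ≤ s ∧
      T = tab (boxB ι n) s k j }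

/-- Defining conditions of `Tab_{C,ι}` on the data `(k,s,j)`. -/
def TabCcond (ι : ℕ → ℕ) (n : ℕ) (k : ℕ) (s : ℤ) (j : ℕ → ℕ) : Prop :=
  (1 ≤ k ∧ k ≤ n - 1 ∧
    (∀ i, 1 ≤ i → i ≤ k → 1 ≤ j i ∧ j i ≤ 2 * n) ∧
    (∀ i, 1 ≤ i → i < k → j i < j (i + 1)) ∧
    1 - (PABC ι n k : ℤ) ≤ s)
  ∨
  (j 1 = 0 ∧ 1 ≤ k ∧ k ≤ n + 1 ∧
    (∀ i, 2 ≤ i → i ≤ k → n + 1 ≤ j i ∧ j i ≤ 2 * n) ∧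
    (∀ i, 2 ≤ i → i < k → j i < j (i + 1)) ∧
    1 - (PABC ι n n : ℤ) ≤ s)

/-- The set `Tab_{C,ι}`. -/
def TabC (ι : ℕ → ℕ) (n : ℕ) : Set (ℕ → ℚ) :=
  { T | ∃ k s j, TabCcond ι n k s j ∧ T = tab (boxC ι n) s k j }

/-- The partial order on (encoded) `J_D`: `a ≤ b` iff `a = b`, or `a < b` numerically and
`(a,b)` is not the incomparable pair `(n, n̄)`. -/
def leD (n a b : ℕ) : Prop := a = b ∨ (a < b ∧ ¬(a = n ∧ b = n + 1))

/-- Defining conditions of `Tab_{D,ι}` on the data `(k,s,j)`. -/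
def TabDcond (ι : ℕ → ℕ) (n : ℕ) (k : ℕ) (s : ℤ) (j : ℕ → ℕ) : Prop :=
  (1 ≤ k ∧ k ≤ n - 2 ∧
    (∀ i, 1 ≤ i → i ≤ k → 1 ≤ j i ∧ j i ≤ 2 * n) ∧
    (∀ i, 1 ≤ i → i < k → ¬ leD n (j (i + 1)) (j i)) ∧
    1 - (PD ι n k : ℤ) ≤ s)
  ∨
  (j 1 = 0 ∧ 1 ≤ k ∧ k ≤ n + 1 ∧
    (∀ i, 2 ≤ i → i ≤ k → n + 1 ≤ j i ∧ j i ≤ 2 * n) ∧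
    (∀ i, 2 ≤ i → i < k → j i < j (i + 1)) ∧
    (k % 2 = 0 → 1 - (PD ι n (n - 1) : ℤ) ≤ s) ∧
    (k % 2 = 1 → 1 - (PD ι n n : ℤ) ≤ s))

/-- The set `Tab_{D,ι}`. -/
def TabD (ι : ℕ → ℕ) (n : ℕ) : Set (ℕ → ℚ) :=
  { T | ∃ k s j, TabDcond ι n k s j ∧ T = tab (boxD ι n) s k j }

end

/-!
A box with entry `e` at depth `t` is a difference `Z(t, e) - Z(t + 1, e - 1)` of a potential `Z` on
the nodes `(t, e)` with `0 ≤ e ≤ 2 n`, and `Z` is invariant under the mirror involution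
`(t, e) ↦ (t + e - n, 2 n - e)`. Each position of `ι` lies below a mirror pair of nodes, and there
a multiple of `β` is the difference of the boxes with entries `e` and `e + 1` at depth `t`. Hence
`S_q` changes at most two entries of a column tableau by one, those exposed at the nodes over `q`,
and the column tableaux are closed under all `S_q`. Conversely, every column other than `[1,…,k]`
either is `S_q` of a column of smaller weight or, moving a mirror pair of entries, defines the same
form as one; for this the weight must be strictly concave in the entries.
-/

section Occurrences

variable {n : ℕ} {ι : ℕ → ℕ} {c d : ℕ}

theorem occPos_succ_spec (hc : ∃ᶠ k in Filter.atTop, ι k = c) (m : ℕ) :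
    occPos ι c m < occPos ι c (m + 1) ∧ ι (occPos ι c (m + 1)) = c :=
  Nat.sInf_mem (s := {k | occPos ι c m < k ∧ ι k = c})
    (Filter.frequently_atTop'.1 hc (occPos ι c m))

theorem occPos_succ_le {m k : ℕ} (hk : occPos ι c m < k) (hι : ι k = c) :
    occPos ι c (m + 1) ≤ k :=
  Nat.sInf_le (s := {k | occPos ι c m < k ∧ ι k = c}) ⟨hk, hι⟩

theorem strictMono_occPos (hc : ∃ᶠ k in Filter.atTop, ι k = c) : StrictMono (occPos ι c) :=
  strictMono_nat_of_lt_succ fun m => (occPos_succ_spec hc m).1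

theorem occPos_pos (hc : ∃ᶠ k in Filter.atTop, ι k = c) {m : ℕ} (hm : 1 ≤ m) :
    0 < occPos ι c m :=
  strictMono_occPos hc hm

theorem apply_occPos (hc : ∃ᶠ k in Filter.atTop, ι k = c) {m : ℕ} (hm : 1 ≤ m) :
    ι (occPos ι c m) = c := by
  obtain ⟨m, rfl⟩ := Nat.exists_eq_add_of_le' hm
  exact (occPos_succ_spec hc m).2

theorem exists_occPos_eq (hc : ∃ᶠ k in Filter.atTop, ι k = c) {k : ℕ} (hk : 1 ≤ k)
    (hι : ι k = c) : ∃ m, 1 ≤ m ∧ occPos ι c m = k := by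
  have mono := strictMono_occPos hc
  obtain ⟨m, hlt, hle⟩ := mono.exists_between_of_tendsto_atTop mono.tendsto_atTop hk
  exact ⟨m + 1, m.succ_pos, (occPos_succ_le hlt hι).antisymm hle⟩

theorem occPos_inj (hc : ∃ᶠ k in Filter.atTop, ι k = c) (hd : ∃ᶠ k in Filter.atTop, ι k = d)
    {m r : ℕ} (hm : 1 ≤ m) (hr : 1 ≤ r) : occPos ι c m = occPos ι d r ↔ c = d ∧ m = r := by
  refine ⟨fun h => ?_, by rintro ⟨rfl, rfl⟩; rfl⟩
  obtain rfl : c = d := by rw [← apply_occPos hc hm, h, apply_occPos hd hr]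
  exact ⟨rfl, (strictMono_occPos hc).injective h⟩

theorem kplus_occPos (hc : ∃ᶠ k in Filter.atTop, ι k = c) {m : ℕ} (hm : 1 ≤ m) :
    kplus ι (occPos ι c m) = occPos ι c (m + 1) := by
  rw [kplus, apply_occPos hc hm, occPos]

theorem kminus_occPos_succ (hc : ∃ᶠ k in Filter.atTop, ι k = c) (m : ℕ) :
    kminus ι (occPos ι c (m + 1)) = occPos ι c m := by
  have le_of_lt {l : ℕ} (hl : l < occPos ι c (m + 1)) (hι : ι l = c) : l ≤ occPos ι c m :=
    not_lt.1 fun h => (occPos_succ_le h hι).not_gt hl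
  rw [kminus, apply_occPos hc m.succ_pos]
  rcases m.eq_zero_or_pos with rfl | hm
  · have : {l | 0 < l ∧ l < occPos ι c (0 + 1) ∧ ι l = c} = ∅ :=
      Set.eq_empty_of_forall_notMem fun l ⟨hl, hlt, hι⟩ => (le_of_lt hlt hι).not_gt hl
    rw [this, csSup_empty]
    rfl
  · exact IsGreatest.csSup_eq
      ⟨⟨occPos_pos hc hm, (occPos_succ_spec hc m).1, apply_occPos hc hm⟩,
        fun l ⟨_, hlt, hι⟩ => le_of_lt hlt hι⟩

theorem pval_add_pval_swap (hc : ∃ᶠ k in Filter.atTop, ι k = c)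
    (hd : ∃ᶠ k in Filter.atTop, ι k = d) (hcd : c ≠ d) : pval ι c d + pval ι d c = 1 := by
  have hne : firstOcc ι c ≠ firstOcc ι d := fun h => hcd ((occPos_inj hc hd le_rfl le_rfl).1 h).1
  unfold pval
  split_ifs <;> omega

/-- Between any two consecutive occurrences of `c` in `ι` there is an occurrence of `d`. -/
def Separates (ι : ℕ → ℕ) (d c : ℕ) : Prop :=
  ∀ m, 1 ≤ m → ∃ q, occPos ι c m < q ∧ q < occPos ι c (m + 1) ∧ ι q = d

namespace Separates

theorem occPos_succ_lt (h : Separates ι d c) {m r : ℕ} (hm : 1 ≤ m)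
    (hlt : occPos ι d r < occPos ι c m) : occPos ι d (r + 1) < occPos ι c (m + 1) := by
  obtain ⟨q, hq, hq_lt, hι⟩ := h m hm
  exact (occPos_succ_le (hlt.trans hq) hι).trans_lt hq_lt

theorem occPos_lt_occPos_succ (h : Separates ι d c) (hc : ∃ᶠ k in Filter.atTop, ι k = c)
    (m : ℕ) : occPos ι d m < occPos ι c (m + 1) := by
  induction m with
  | zero => exact occPos_pos hc le_rfl
  | succ m ih => exact h.occPos_succ_lt m.succ_pos ih

theorem occPos_lt_occPos (h : Separates ι c d) (hlt : firstOcc ι c < firstOcc ι d) {m : ℕ}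
    (hm : 1 ≤ m) : occPos ι c m < occPos ι d m := by
  induction m, hm using Nat.le_induction with
  | base => exact hlt
  | succ m hm ih => exact h.occPos_succ_lt hm ih

theorem occPos_add_pval_mem_Ioo (h : Separates ι d c) (hs : Separates ι c d)
    (hc : ∃ᶠ k in Filter.atTop, ι k = c) (hd : ∃ᶠ k in Filter.atTop, ι k = d) (hcd : c ≠ d)
    {m : ℕ} (hm : 1 ≤ m) :
    occPos ι d (m + pval ι d c) ∈ Set.Ioo (occPos ι c m) (occPos ι c (m + 1)) := by
  have hne : firstOcc ι c ≠ firstOcc ι d := fun e => hcd ((occPos_inj hc hd le_rfl le_rfl).1 e).1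
  unfold pval
  split_ifs with hlt
  · exact ⟨hs.occPos_lt_occPos_succ hd m, h.occPos_lt_occPos hlt m.succ_pos⟩
  · exact ⟨hs.occPos_lt_occPos (hne.lt_or_gt.resolve_right hlt) hm, h.occPos_lt_occPos_succ hc m⟩

theorem occPos_mem_Ioo_iff (h : Separates ι d c) (hs : Separates ι c d)
    (hc : ∃ᶠ k in Filter.atTop, ι k = c) (hd : ∃ᶠ k in Filter.atTop, ι k = d) (hcd : c ≠ d)
    {m r : ℕ} (hm : 1 ≤ m) (hr : 1 ≤ r) :
    occPos ι d r ∈ Set.Ioo (occPos ι c m) (occPos ι c (m + 1)) ↔ r = m + pval ι d c := by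
  have mem := h.occPos_add_pval_mem_Ioo hs hc hd hcd hm
  refine ⟨fun hr_mem => ?_, by rintro rfl; exact mem⟩
  have not_lt {a b : ℕ} (ha : 1 ≤ a) (hca : occPos ι c m < occPos ι d a)
      (hbc : occPos ι d b < occPos ι c (m + 1)) : ¬a < b := fun hab =>
    (hbc.trans (hs.occPos_succ_lt ha hca)).not_ge ((strictMono_occPos hd).monotone hab)
  have := not_lt hr hr_mem.1 mem.2
  have := not_lt (by omega) mem.1 hr_mem.2
  omega

end Separates

theorem Admissible.frequently_eq (hadm : Admissible n ι) (h1 : 1 ≤ c) (hn : c ≤ n) :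
    ∃ᶠ k in Filter.atTop, ι k = c :=
  Filter.frequently_atTop.2 (hadm.2.2 c h1 hn)

theorem Admissible.exists_eq_occPos (hadm : Admissible n ι) {k : ℕ} (hk : 1 ≤ k) :
    ∃ c m, 1 ≤ c ∧ c ≤ n ∧ 1 ≤ m ∧ k = occPos ι c m := by
  obtain ⟨h1, hn⟩ := hadm.1 k hk
  obtain ⟨m, hm, h⟩ := exists_occPos_eq (hadm.frequently_eq h1 hn) hk rfl
  exact ⟨ι k, m, h1, hn, hm, h.symm⟩

theorem Adapted.separates {A : ℕ → ℕ → ℤ} (had : Adapted n A ι) (hadm : Admissible n ι)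
    (hc1 : 1 ≤ c) (hcn : c ≤ n) (hd1 : 1 ≤ d) (hdn : d ≤ n) (hcd : c ≠ d) (hA : A c d ≠ 0) :
    Separates ι d c := by
  intro m hm
  by_contra! hnot
  have hc := hadm.frequently_eq hc1 hcn
  have hι := apply_occPos hc hm
  have hι_succ := apply_occPos hc m.succ_pos
  refine had c d hc1 hcn hd1 hdn hcd hA _ _ (occPos_pos hc hm) (occPos_succ_spec hc m).1
    (.inl hι) (.inl hι_succ) (fun q hq hq_lt => ⟨fun h => ?_, hnot q hq hq_lt⟩)
    (hι.trans hι_succ.symm)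
  exact (occPos_succ_le hq h).not_gt hq_lt

theorem xsj_natCast (h1 : 1 ≤ c) (hn : c ≤ n) {m : ℕ} (hm : 1 ≤ m) :
    xsj ι n m c = xc (occPos ι c m) := by
  rw [xsj, if_pos ⟨by omega, h1, hn⟩, Int.toNat_natCast]

theorem xsj_apply_occPos (hadm : Admissible n ι) (s : ℤ) (c : ℕ) (hd1 : 1 ≤ d) (hdn : d ≤ n)
    {r : ℕ} (hr : 1 ≤ r) : xsj ι n s c (occPos ι d r) = if c = d ∧ s = r then 1 else 0 := by
  by_cases hs : 1 ≤ s ∧ 1 ≤ c ∧ c ≤ n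
  · have inj := occPos_inj (hadm.frequently_eq hd1 hdn) (hadm.frequently_eq hs.2.1 hs.2.2) hr
      (show 1 ≤ s.toNat by omega)
    rw [xsj, if_pos hs, xc, if_congr inj rfl rfl]
    exact if_congr (by omega) rfl rfl
  · rw [xsj, if_neg hs, if_neg (by omega), Pi.zero_apply]

end Occurrences

section Beta

variable {n : ℕ} {γ : ℚ} {A : ℕ → ℕ → ℤ} {ι : ℕ → ℕ}

/-- The multiplicity with which the coordinate `x_{s,n}` enters the boxes: `γ` is `1` in type B
and `2` in type C. -/
def nodeWeight (n : ℕ) (γ : ℚ) (e : ℕ) : ℚ := if e = n then γ else 1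

/-- An admissible sequence `ι` adapted to a Cartan matrix `A` that is of type `B_n` if `γ = 1` and
of type `C_n` if `γ = 2`; only the properties of `A` entering the argument are recorded. -/
structure AdaptedBC (n : ℕ) (γ : ℚ) (A : ℕ → ℕ → ℤ) (ι : ℕ → ℕ) : Prop where
  admissible : Admissible n ι
  adapted : Adapted n A ι
  pos : 0 < γ
  eq_zero : ∀ c d, c ≠ d → c + 1 ≠ d → d + 1 ≠ c → A c d = 0
  up : ∀ c, 1 ≤ c → c < n → (A c (c + 1) : ℚ) = -nodeWeight n γ (c + 1)
  down : ∀ c, 1 ≤ c → c < n →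
    nodeWeight n γ (c + 1) * A (c + 1) c = if c + 1 = n then -2 else -1

theorem adaptedBC_cartanB (hadm : Admissible n ι) (had : Adapted n (cartanB n) ι) :
    AdaptedBC n 1 (cartanB n) ι where
  admissible := hadm
  adapted := had
  pos := one_pos
  eq_zero c d hne hup hdown := by grind [cartanB]
  up c _ hn := by
    have entry : cartanB n c (c + 1) = -1 := by grind [cartanB]
    rw [entry, nodeWeight]
    split_ifs <;> norm_num
  down c h1 hn := by
    have entry : cartanB n (c + 1) c = if c + 1 = n then -2 else -1 := by grind [cartanB]
    rw [entry, nodeWeight]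
    split_ifs <;> norm_num

theorem adaptedBC_cartanC (hadm : Admissible n ι) (had : Adapted n (cartanC n) ι) :
    AdaptedBC n 2 (cartanC n) ι where
  admissible := hadm
  adapted := had
  pos := two_pos
  eq_zero c d hne hup hdown := by grind [cartanC]
  up c h1 hn := by
    have entry : cartanC n c (c + 1) = if c + 1 = n then -2 else -1 := by grind [cartanC]
    rw [entry, nodeWeight]
    split_ifs <;> norm_num
  down c h1 hn := by
    have entry : cartanC n (c + 1) c = -1 := by grind [cartanC]
    rw [entry, nodeWeight]
    split_ifs <;> norm_num

theorem nodeWeight_pos (hγ : 0 < γ) (e : ℕ) : 0 < nodeWeight n γ e := by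
  unfold nodeWeight
  split_ifs <;> [exact hγ; exact one_pos]

namespace AdaptedBC

variable {c d m : ℕ}

theorem apply_ne_zero (h : AdaptedBC n γ A ι) (hc1 : 1 ≤ c) (hcn : c ≤ n) (hd1 : 1 ≤ d)
    (hdn : d ≤ n) (hadj : d + 1 = c ∨ d = c + 1) : A c d ≠ 0 := by
  rcases hadj with rfl | rfl
  · intro h0
    have := h.down d hd1 hcn
    rw [h0, Int.cast_zero, mul_zero] at this
    split_ifs at this <;> norm_num at this
  · intro h0
    have := h.up c hc1 hdn
    rw [h0, Int.cast_zero] at this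
    have := nodeWeight_pos (n := n) h.pos (c + 1)
    linarith

theorem sum_xc_between (h : AdaptedBC n γ A ι) (hc1 : 1 ≤ c) (hcn : c ≤ n) (hm : 1 ≤ m)
    (hadj : d + 1 = c ∨ d = c + 1) :
    ∑ q ∈ Finset.Ioo (occPos ι c m) (occPos ι c (m + 1)) with ι q = d, xc q =
      xsj ι n (m + pval ι d c) d := by
  have hadm := h.admissible
  by_cases hd : 1 ≤ d ∧ d ≤ n
  · have hcd : c ≠ d := by omega
    have fc := hadm.frequently_eq hc1 hcn
    have fd := hadm.frequently_eq hd.1 hd.2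
    have sep : Separates ι d c := h.adapted.separates hadm hc1 hcn hd.1 hd.2 hcd
      (h.apply_ne_zero hc1 hcn hd.1 hd.2 hadj)
    have sep_swap : Separates ι c d := h.adapted.separates hadm hd.1 hd.2 hc1 hcn hcd.symm
      (h.apply_ne_zero hd.1 hd.2 hc1 hcn (by omega))
    have filter_eq : ((Finset.Ioo (occPos ι c m) (occPos ι c (m + 1))).filter (ι · = d)) =
        {occPos ι d (m + pval ι d c)} := by
      ext q
      rw [Finset.mem_filter, Finset.mem_Ioo, Finset.mem_singleton]
      constructor
      · rintro ⟨hq, hι⟩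
        obtain ⟨r, hr, rfl⟩ := exists_occPos_eq fd (by omega) hι
        rw [(sep.occPos_mem_Ioo_iff sep_swap fc fd hcd hm hr).1 hq]
      · rintro rfl
        exact ⟨sep.occPos_add_pval_mem_Ioo sep_swap fc fd hcd hm, apply_occPos fd (by omega)⟩
    rw [filter_eq, Finset.sum_singleton, ← xsj_natCast hd.1 hd.2 (by omega), Nat.cast_add]
  · rw [xsj, if_neg (by tauto), Finset.filter_false_of_mem, Finset.sum_empty]
    rintro q hq rfl
    exact hd (hadm.1 q (by rw [Finset.mem_Ioo] at hq; omega))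

theorem beta_occPos (h : AdaptedBC n γ A ι) (hc1 : 1 ≤ c) (hcn : c ≤ n) (hm : 1 ≤ m) :
    beta A ι (occPos ι c m) =
      xsj ι n m c + xsj ι n (m + 1) c
      + (A c (c - 1) : ℚ) • xsj ι n (m + pval ι (c - 1) c) (c - 1)
      + (A c (c + 1) : ℚ) • xsj ι n (m + pval ι (c + 1) c) (c + 1) := by
  have fc := h.admissible.frequently_eq hc1 hcn
  have summand : ∀ q ∈ Finset.Ioo (occPos ι c m) (occPos ι c (m + 1)),
      (A c (ι q) : ℚ) • xc q = (if ι q = c - 1 then (A c (c - 1) : ℚ) • xc q else 0)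
        + if ι q = c + 1 then (A c (c + 1) : ℚ) • xc q else 0 := by
    intro q hq
    rw [Finset.mem_Ioo] at hq
    have ne_c : ι q ≠ c := fun hι => (occPos_succ_le hq.1 hι).not_gt hq.2
    by_cases hdown : ι q = c - 1
    · rw [if_pos hdown, if_neg (by omega), add_zero, hdown]
    by_cases hup : ι q = c + 1
    · rw [if_neg hdown, if_pos hup, zero_add, hup]
    · rw [if_neg hdown, if_neg hup, h.eq_zero _ _ ne_c.symm (by omega) (by omega), Int.cast_zero,
        zero_smul, add_zero]
  rw [beta, if_neg (occPos_pos fc hm).ne', kplus_occPos fc hm, apply_occPos fc hm,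
    Finset.sum_congr rfl summand, Finset.sum_add_distrib, ← Finset.sum_filter,
    ← Finset.sum_filter, ← Finset.smul_sum, ← Finset.smul_sum,
    h.sum_xc_between hc1 hcn hm (.inl (by omega)), h.sum_xc_between hc1 hcn hm (.inr rfl),
    ← xsj_natCast hc1 hcn hm, ← xsj_natCast hc1 hcn (m.succ_pos), Nat.cast_succ]
  abel

end AdaptedBC

end Beta

section Nodes

variable {n e : ℕ} {γ : ℚ} {ι : ℕ → ℕ} {t : ℤ}

/-- The letter of `ι` at which a box with entry `e` is raised to `e + 1`; the mirror images `e` and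
`2 n - e` have the same letter. -/
def foldLetter (n e : ℕ) : ℕ := min e (2 * n - e)

/-- A node `(t, e)` stands for the step from entry `e` to entry `e + 1` in a box at depth `t`. This
is the index, among the occurrences of `foldLetter n e`, of the position of `ι` below the node; the
node exists in `ι` only if the index is at least `1`. -/
noncomputable def occIdx (ι : ℕ → ℕ) (n : ℕ) (t : ℤ) (e : ℕ) : ℤ :=
  t + ((e - n : ℕ) : ℤ) + PABC ι n (foldLetter n e)

/-- The position of `ι` below the node `(t, e)`, or `0` if the occurrence index is not positive. -/
noncomputable def nodePos (ι : ℕ → ℕ) (n : ℕ) (t : ℤ) (e : ℕ) : ℕ :=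
  occPos ι (foldLetter n e) (occIdx ι n t e).toNat

/-- The weighted coordinate at the position below the node `(t, e)`; the boxes are differences of
potentials. -/
noncomputable def potential (ι : ℕ → ℕ) (n : ℕ) (γ : ℚ) (t : ℤ) (e : ℕ) : ℕ → ℚ :=
  nodeWeight n γ e • xsj ι n (occIdx ι n t e) (foldLetter n e)

/-- The common form of the boxes of types B (`γ = 1`) and C (`γ = 2`) with entry `e` encoded in
`[1, 2 n]`. -/
noncomputable def boxBC (ι : ℕ → ℕ) (n : ℕ) (γ : ℚ) (t : ℤ) (e : ℕ) : ℕ → ℚ :=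
  potential ι n γ t e - potential ι n γ (t + 1) (e - 1)

theorem foldLetter_le (n e : ℕ) : foldLetter n e ≤ n := by
  unfold foldLetter
  omega

theorem foldLetter_pos (he1 : 1 ≤ e) (he : e < 2 * n) : 1 ≤ foldLetter n e := by
  unfold foldLetter
  omega

theorem foldLetter_of_le (he : e ≤ n) : foldLetter n e = e := by
  unfold foldLetter
  omega

theorem foldLetter_mirror (he : e ≤ 2 * n) : foldLetter n (2 * n - e) = foldLetter n e := by
  unfold foldLetter
  omega

theorem occIdx_of_le (he : e ≤ n) : occIdx ι n t e = t + PABC ι n e := by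
  rw [occIdx, foldLetter_of_le he, Nat.sub_eq_zero_of_le he, Nat.cast_zero, add_zero]

theorem occIdx_add (ι : ℕ → ℕ) (n : ℕ) (t u : ℤ) (e : ℕ) :
    occIdx ι n (t + u) e = occIdx ι n t e + u := by
  unfold occIdx
  ring

theorem occIdx_mirror (he : e ≤ 2 * n) :
    occIdx ι n (t + e - n) (2 * n - e) = occIdx ι n t e := by
  rw [occIdx, occIdx, foldLetter_mirror he]
  omega

theorem nodePos_mirror (he : e ≤ 2 * n) :
    nodePos ι n (t + e - n) (2 * n - e) = nodePos ι n t e := by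
  rw [nodePos, nodePos, occIdx_mirror he, foldLetter_mirror he]

theorem nodeWeight_mirror (he : e ≤ 2 * n) :
    nodeWeight n γ (2 * n - e) = nodeWeight n γ e :=
  if_congr (by omega) rfl rfl

theorem potential_mirror (he : e ≤ 2 * n) :
    potential ι n γ (t + e - n) (2 * n - e) = potential ι n γ t e := by
  rw [potential, potential, occIdx_mirror he, foldLetter_mirror he, nodeWeight_mirror he]

theorem potential_of_le (he : e ≤ n) :
    potential ι n γ t e = nodeWeight n γ e • xsj ι n (t + PABC ι n e) e := by
  rw [potential, occIdx_of_le he, foldLetter_of_le he]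

theorem potential_of_ge (he : n ≤ e) (he2 : e ≤ 2 * n) :
    potential ι n γ t e =
      nodeWeight n γ e • xsj ι n (t + e - n + PABC ι n (2 * n - e)) (2 * n - e) := by
  rw [← potential_mirror he2, potential_of_le (by omega), nodeWeight_mirror he2]

theorem nodeWeight_self : nodeWeight n γ n = γ := if_pos rfl

theorem nodeWeight_of_ne (he : e ≠ n) : nodeWeight n γ e = 1 := if_neg he

theorem boxB_eq_boxBC (he1 : 1 ≤ e) (he : e ≤ 2 * n) : boxB ι n t e = boxBC ι n 1 t e := by
  have weight_one (e : ℕ) : nodeWeight n 1 e = 1 := ite_self _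
  rcases le_or_gt e n with hen | hen
  · rw [boxB, if_pos hen, boxBC, potential_of_le hen, potential_of_le (by omega), weight_one,
      weight_one, one_smul, one_smul]
    congr 2
    ring
  · rw [boxB, if_neg hen.not_ge, boxBC, potential_of_ge hen.le he,
      potential_of_ge (by omega) (by omega), weight_one, weight_one, one_smul, one_smul,
      show 2 * n - (e - 1) = 2 * n + 1 - e by omega]
    congr 2 <;> omega

theorem boxC_eq_boxBC (he1 : 1 ≤ e) (he : e ≤ 2 * n) : boxC ι n t e = boxBC ι n 2 t e := by
  rw [boxC, if_neg (by omega)]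
  split_ifs with h_lt h_eq h_succ
  · rw [boxBC, potential_of_le h_lt.le, potential_of_le (by omega), nodeWeight_of_ne h_lt.ne,
      nodeWeight_of_ne (by omega), one_smul, one_smul]
    congr 2
    ring
  · subst h_eq
    rw [boxBC, potential_of_le le_rfl, potential_of_le (by omega), nodeWeight_self,
      nodeWeight_of_ne (by omega), one_smul]
    congr 2
    ring
  · subst h_succ
    rw [boxBC, Nat.add_sub_cancel, potential_of_ge (by omega) (by omega), potential_of_le le_rfl,
      nodeWeight_self, nodeWeight_of_ne (by omega), one_smul,
      show 2 * n - (n + 1) = n - 1 by omega]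
    congr 2
    · omega
    · congr 1
      omega
  · rw [boxBC, potential_of_ge (by omega) he, potential_of_ge (by omega) (by omega),
      nodeWeight_of_ne h_eq, nodeWeight_of_ne (by omega), one_smul, one_smul,
      show 2 * n - (e - 1) = 2 * n + 1 - e by omega]
    congr 2 <;> omega

theorem boxBC_sub_boxBC_succ_mirror (he1 : 1 ≤ e) (he : e < 2 * n) :
    boxBC ι n γ (t + e - n) (2 * n - e) - boxBC ι n γ (t + e - n) (2 * n - e + 1) =
      boxBC ι n γ t e - boxBC ι n γ t (e + 1) := by
  have mirror_self := potential_mirror (ι := ι) (γ := γ) (t := t) (show e ≤ 2 * n by omega)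
  have mirror_succ := potential_mirror (ι := ι) (γ := γ) (t := t + 1) (show e ≤ 2 * n by omega)
  have mirror_next := potential_mirror (ι := ι) (γ := γ) (t := t) (show e + 1 ≤ 2 * n by omega)
  have mirror_pred := potential_mirror (ι := ι) (γ := γ) (t := t + 1) (show e - 1 ≤ 2 * n by omega)
  rw [show t + 1 + (e : ℤ) - n = t + e - n + 1 by ring] at mirror_succ
  rw [show t + ((e + 1 : ℕ) : ℤ) - n = t + e - n + 1 by push_cast; ring,
    show 2 * n - (e + 1) = 2 * n - e - 1 by omega] at mirror_next
  rw [show t + 1 + ((e - 1 : ℕ) : ℤ) - n = t + e - n by omega,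
    show 2 * n - (e - 1) = 2 * n - e + 1 by omega] at mirror_pred
  simp only [boxBC, Nat.add_sub_cancel, mirror_self, mirror_succ, mirror_next, mirror_pred]
  abel

theorem PABC_succ {c : ℕ} (h1 : 1 ≤ c) (hn : c < n) :
    PABC ι n (c + 1) = PABC ι n c + pval ι (c + 1) c := by
  rw [PABC, PABC, if_pos (Nat.succ_le_of_lt hn), if_pos hn.le, Finset.sum_Icc_succ_top (by omega),
    Nat.add_sub_cancel]

theorem xsj_zero_right (s : ℤ) : xsj ι n s 0 = 0 :=
  if_neg (by omega)

theorem Admissible.pval_add_pval_succ (hadm : Admissible n ι) {c : ℕ} (h1 : 1 ≤ c) (hn : c < n) :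
    pval ι c (c + 1) + pval ι (c + 1) c = 1 :=
  pval_add_pval_swap (hadm.frequently_eq h1 hn.le) (hadm.frequently_eq (by omega) hn)
    c.lt_succ_self.ne

theorem Admissible.xsj_pval_pred (hadm : Admissible n ι) (he1 : 1 ≤ e) (he : e ≤ n) :
    xsj ι n (occIdx ι n t e + pval ι (e - 1) e) (e - 1) =
      xsj ι n (occIdx ι n (t + 1) (e - 1)) (e - 1) := by
  obtain rfl | he2 := he1.eq_or_lt
  · rw [Nat.sub_self, xsj_zero_right, xsj_zero_right]
  · obtain ⟨d, rfl⟩ := Nat.exists_eq_add_of_le' he1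
    have := hadm.pval_add_pval_succ (show 1 ≤ d by omega) he
    rw [Nat.add_sub_cancel, occIdx_of_le he, occIdx_of_le (by omega), PABC_succ (by omega) he]
    congr 1
    push_cast
    omega

theorem xsj_pval_succ (he1 : 1 ≤ e) (he : e < n) :
    xsj ι n (occIdx ι n t e + pval ι (e + 1) e) (e + 1) =
      xsj ι n (occIdx ι n t (e + 1)) (e + 1) := by
  rw [occIdx_of_le he.le, occIdx_of_le he, PABC_succ he1 he]
  congr 1
  push_cast
  ring

end Nodes

namespace AdaptedBC

variable {n e : ℕ} {γ : ℚ} {A : ℕ → ℕ → ℤ} {ι : ℕ → ℕ} {t : ℤ}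

theorem down_smul_xsj (h : AdaptedBC n γ A ι) (he1 : 1 ≤ e) (he : e ≤ n) (s : ℤ) :
    (nodeWeight n γ e * A e (e - 1)) • xsj ι n s (e - 1) =
      (if e = n then -2 else -1 : ℚ) • xsj ι n s (e - 1) := by
  obtain rfl | he2 := he1.eq_or_lt
  · rw [Nat.sub_self, xsj_zero_right, smul_zero, smul_zero]
  · obtain ⟨d, rfl⟩ := Nat.exists_eq_add_of_le' he1
    rw [Nat.add_sub_cancel, h.down d (by omega) he]

theorem nodeWeight_smul_beta_nodePos_of_le (h : AdaptedBC n γ A ι) (he1 : 1 ≤ e) (he : e ≤ n)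
    (hidx : 1 ≤ occIdx ι n t e) :
    nodeWeight n γ e • beta A ι (nodePos ι n t e) =
      boxBC ι n γ t e - boxBC ι n γ t (e + 1) := by
  have hm : ((occIdx ι n t e).toNat : ℤ) = occIdx ι n t e := Int.toNat_of_nonneg (by omega)
  have pot_t : potential ι n γ t e = nodeWeight n γ e • xsj ι n (occIdx ι n t e) e := by
    rw [potential, foldLetter_of_le he]
  have pot_t_succ : potential ι n γ (t + 1) e =
      nodeWeight n γ e • xsj ι n (occIdx ι n t e + 1) e := by
    rw [potential, foldLetter_of_le he, occIdx_add]
  have pot_pred : potential ι n γ (t + 1) (e - 1) =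
      xsj ι n (occIdx ι n (t + 1) (e - 1)) (e - 1) := by
    rw [potential, foldLetter_of_le (by omega), nodeWeight_of_ne (by omega), one_smul]
  rw [nodePos, foldLetter_of_le he, h.beta_occPos he1 he (by omega), hm,
    h.admissible.xsj_pval_pred he1 he, smul_add, smul_add, smul_add, smul_smul, smul_smul,
    h.down_smul_xsj he1 he, ← pot_pred, ← pot_t, ← pot_t_succ, boxBC, boxBC, Nat.add_sub_cancel]
  rcases he.eq_or_lt with rfl | he_lt
  · have pot_succ : potential ι e γ t (e + 1) = potential ι e γ (t + 1) (e - 1) := by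
      rw [← potential_mirror (by omega)]
      congr 1 <;> omega
    rw [pot_succ, if_pos rfl, xsj, if_neg (by omega)]
    module
  · have pot_succ : potential ι n γ t (e + 1) =
        nodeWeight n γ (e + 1) • xsj ι n (occIdx ι n t (e + 1)) (e + 1) := by
      rw [potential, foldLetter_of_le he_lt]
    rw [xsj_pval_succ he1 he_lt, h.up e he1 he_lt, mul_neg, neg_smul, mul_smul, ← pot_succ,
      if_neg he_lt.ne, nodeWeight_of_ne he_lt.ne]
    module

theorem nodeWeight_smul_beta_nodePos (h : AdaptedBC n γ A ι) (he1 : 1 ≤ e) (he : e < 2 * n)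
    (hidx : 1 ≤ occIdx ι n t e) :
    nodeWeight n γ e • beta A ι (nodePos ι n t e) =
      boxBC ι n γ t e - boxBC ι n γ t (e + 1) := by
  rcases le_or_gt e n with hen | hen
  · exact h.nodeWeight_smul_beta_nodePos_of_le he1 hen hidx
  · rw [← nodeWeight_mirror he.le, ← nodePos_mirror he.le,
      h.nodeWeight_smul_beta_nodePos_of_le (by omega) (by omega)
        (by rwa [occIdx_mirror he.le]), boxBC_sub_boxBC_succ_mirror he1 he]

end AdaptedBC

section Columns

variable {n k i v e : ℕ} {s t : ℤ} {j : ℕ → ℕ}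

theorem sum_apply_update_add {α β M : Type*} [DecidableEq α] [AddCommMonoid M] (f : α → β → M)
    (g : α → β) {S : Finset α} {a : α} (ha : a ∈ S) (b : β) :
    ∑ x ∈ S, f x (Function.update g a b x) + f a (g a) = ∑ x ∈ S, f x (g x) + f a b := by
  have off : ∑ x ∈ S.erase a, f x (Function.update g a b x) = ∑ x ∈ S.erase a, f x (g x) :=
    Finset.sum_congr rfl fun x hx => by rw [Function.update_of_ne (Finset.ne_of_mem_erase hx)]
  rw [← Finset.add_sum_erase S _ ha, ← Finset.add_sum_erase S (fun x => f x (g x)) ha, off,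
    Function.update_self]
  ac_rfl

theorem tab_congr {box box' : ℤ → ℕ → ℕ → ℚ} {j' : ℕ → ℕ}
    (h : ∀ i, 1 ≤ i → i ≤ k → ∀ t, box t (j i) = box' t (j' i)) :
    tab box s k j = tab box' s k j' :=
  Finset.sum_congr rfl fun i hi => h i (Finset.mem_Icc.1 hi).1 (Finset.mem_Icc.1 hi).2 _

theorem tab_update (box : ℤ → ℕ → ℕ → ℚ) (hi1 : 1 ≤ i) (hik : i ≤ k) (v : ℕ) :
    tab box s k (Function.update j i v) =
      tab box s k j - box (s + k - i) (j i) + box (s + k - i) v := by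
  have := sum_apply_update_add (fun (x : ℕ) e => box (s + k - x) e) j
    (Finset.mem_Icc.2 ⟨hi1, hik⟩) v
  rw [tab, eq_sub_of_add_eq this, tab]
  abel

/-- The encoded entries `j 1 < ⋯ < j k` of a column tableau all of whose entries lie in `J_X`. -/
structure IsColumn (n k : ℕ) (j : ℕ → ℕ) : Prop where
  bounds : ∀ i, 1 ≤ i → i ≤ k → 1 ≤ j i ∧ j i ≤ 2 * n
  lt_succ : ∀ i, 1 ≤ i → i < k → j i < j (i + 1)

namespace IsColumn

theorem lt (h : IsColumn n k j) {a b : ℕ} (ha : 1 ≤ a) (hab : a < b) (hb : b ≤ k) :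
    j a < j b := by
  induction b, hab using Nat.le_induction with
  | base => exact h.lt_succ a ha hb
  | succ b hab ih => exact (ih (by omega)).trans (h.lt_succ b (by omega) hb)

theorem le_apply (h : IsColumn n k j) (hi1 : 1 ≤ i) (hik : i ≤ k) : i ≤ j i := by
  induction i, hi1 using Nat.le_induction with
  | base => exact (h.bounds 1 le_rfl hik).1
  | succ i hi ih => exact (ih (by omega)).trans_lt (h.lt_succ i hi hik)

theorem update (h : IsColumn n k j) (hv1 : 1 ≤ v) (hv : v ≤ 2 * n)
    (hpred : 1 < i → j (i - 1) < v) (hsucc : i < k → v < j (i + 1)) :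
    IsColumn n k (Function.update j i v) where
  bounds a ha hak := by
    rcases eq_or_ne a i with rfl | ha_ne
    · rw [Function.update_self]
      exact ⟨hv1, hv⟩
    · rw [Function.update_of_ne ha_ne]
      exact h.bounds a ha hak
  lt_succ a ha hak := by
    rcases eq_or_ne a i with rfl | ha_ne
    · rw [Function.update_self, Function.update_of_ne a.succ_ne_self]
      exact hsucc hak
    rw [Function.update_of_ne ha_ne]
    rcases eq_or_ne (a + 1) i with rfl | ha_ne_succ
    · rw [Function.update_self]
      exact hpred (by omega)
    · rw [Function.update_of_ne ha_ne_succ]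
      exact h.lt_succ a ha hak

theorem update_succ (h : IsColumn n k j) (hi1 : 1 ≤ i) (hik : i ≤ k) (hj : j i = e)
    (he : e < 2 * n) (hnext : i < k → j (i + 1) ≠ e + 1) :
    IsColumn n k (Function.update j i (e + 1)) := by
  refine h.update (by omega) he (fun hlt => ?_) fun hlt => ?_
  · have := h.lt (show 1 ≤ i - 1 by omega) (show i - 1 < i by omega) hik
    omega
  · have := h.lt_succ i hi1 hlt
    have := hnext hlt
    omega

theorem update_pred (h : IsColumn n k j) (hi1 : 1 ≤ i) (hik : i ≤ k) (he1 : 1 ≤ e)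
    (hj : j i = e + 1) (hprev : 1 < i → j (i - 1) ≠ e) :
    IsColumn n k (Function.update j i e) := by
  have := h.bounds i hi1 hik
  refine h.update he1 (by omega) (fun hlt => ?_) fun hlt => ?_
  · have := h.lt (show 1 ≤ i - 1 by omega) (show i - 1 < i by omega) hik
    have := hprev hlt
    omega
  · have := h.lt_succ i hi1 hlt
    omega

end IsColumn

/-- The column tableau `[j_1,…,j_k]_s` has a box with entry `e` at depth `t`. -/
def HasBox (s : ℤ) (k : ℕ) (j : ℕ → ℕ) (t : ℤ) (e : ℕ) : Prop :=
  ∃ i, 1 ≤ i ∧ i ≤ k ∧ s + k - i = t ∧ j i = e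

open scoped Classical in
/-- The contribution of the node `(t, e)` to the coefficients of a column tableau: `1` if an entry
`e` at depth `t` can be raised within the column, `-1` if an entry `e + 1` at depth `t - 1` can be
lowered, and `0` otherwise. -/
noncomputable def exposure (s : ℤ) (k : ℕ) (j : ℕ → ℕ) (t : ℤ) (e : ℕ) : ℚ :=
  (if HasBox s k j t e then 1 else 0) - if HasBox s k j (t - 1) (e + 1) then 1 else 0

open scoped Classical in
theorem sum_ite_row (s : ℤ) (k : ℕ) (j : ℕ → ℕ) (t : ℤ) (e : ℕ) :
    ∑ i ∈ Finset.Icc 1 k, (if s + k - i = t ∧ j i = e then 1 else 0 : ℚ) =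
      if HasBox s k j t e then 1 else 0 := by
  split_ifs with h
  · obtain ⟨i, hi1, hik, ht, he⟩ := h
    rw [Finset.sum_eq_single_of_mem i (Finset.mem_Icc.2 ⟨hi1, hik⟩)
      fun a _ ha => if_neg (by omega), if_pos ⟨ht, he⟩]
  · refine Finset.sum_eq_zero fun i hi => if_neg fun ⟨ht, he⟩ => h ?_
    exact ⟨i, (Finset.mem_Icc.1 hi).1, (Finset.mem_Icc.1 hi).2, ht, he⟩

theorem exposure_trichotomy (s : ℤ) (k : ℕ) (j : ℕ → ℕ) (t : ℤ) (e : ℕ) :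
    exposure s k j t e = 0 ∨
    (exposure s k j t e = 1 ∧
      ∃ i, 1 ≤ i ∧ i ≤ k ∧ s + k - i = t ∧ j i = e ∧ (i < k → j (i + 1) ≠ e + 1)) ∨
    (exposure s k j t e = -1 ∧
      ∃ i, 1 ≤ i ∧ i ≤ k ∧ s + k - i = t - 1 ∧ j i = e + 1 ∧ (1 < i → j (i - 1) ≠ e)) := by
  unfold exposure
  split_ifs with h_up h_down h_down
  · exact .inl (sub_self 1)
  · obtain ⟨i, hi1, hik, ht, he⟩ := h_up
    exact .inr (.inl ⟨sub_zero 1, i, hi1, hik, ht, he,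
      fun hlt h => h_down ⟨i + 1, by omega, hlt, by omega, h⟩⟩)
  · obtain ⟨i, hi1, hik, ht, he⟩ := h_down
    exact .inr (.inr ⟨zero_sub 1, i, hi1, hik, ht, he,
      fun hlt h => h_up ⟨i - 1, by omega, by omega, by omega, h⟩⟩)
  · exact .inl (sub_zero 0)

theorem hasBox_update_iff (hj : j i ≠ e) (hv : v ≠ e) :
    HasBox s k (Function.update j i v) t e ↔ HasBox s k j t e := by
  refine exists_congr fun a => and_congr_right' <| and_congr_right' <| and_congr_right' ?_
  rcases eq_or_ne a i with rfl | ha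
  · rw [Function.update_self]
    exact iff_of_false hv hj
  · rw [Function.update_of_ne ha]

open scoped Classical in
theorem exposure_update (hj : j i ≠ e) (hj_succ : j i ≠ e + 1) (hv : v ≠ e) (hv_succ : v ≠ e + 1) :
    exposure s k (Function.update j i v) t e = exposure s k j t e := by
  rw [exposure, if_congr (hasBox_update_iff hj hv) rfl rfl,
    if_congr (hasBox_update_iff hj_succ hv_succ) rfl rfl, exposure]

end Columns

section Coefficients

variable {n k e f : ℕ} {γ : ℚ} {ι j : ℕ → ℕ} {s t u : ℤ}

theorem foldLetter_eq_and_occIdx_eq_iff (hf1 : 1 ≤ f) (hf : f < 2 * n) :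
    foldLetter n e = foldLetter n f ∧ occIdx ι n t e = occIdx ι n u f ↔
      (t = u ∧ e = f) ∨ (t = u + f - n ∧ e = 2 * n - f) := by
  constructor
  · rintro ⟨hfold, hidx⟩
    rw [occIdx, occIdx, hfold] at hidx
    unfold foldLetter at hfold
    omega
  · rintro (⟨rfl, rfl⟩ | ⟨rfl, rfl⟩)
    · exact ⟨rfl, rfl⟩
    · exact ⟨foldLetter_mirror hf.le, occIdx_mirror hf.le⟩

theorem potential_nodePos (hadm : Admissible n ι) (hf1 : 1 ≤ f) (hf : f < 2 * n)
    (hidx : 1 ≤ occIdx ι n u f) :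
    potential ι n γ t e (nodePos ι n u f) =
      nodeWeight n γ f * ((if t = u ∧ e = f then 1 else 0) +
        if f = n then 0 else if t = u + f - n ∧ e = 2 * n - f then 1 else 0) := by
  rw [potential, Pi.smul_apply, smul_eq_mul, nodePos,
    xsj_apply_occPos hadm _ _ (foldLetter_pos hf1 hf) (foldLetter_le n f) (by omega),
    Int.toNat_of_nonneg (by omega), if_congr (foldLetter_eq_and_occIdx_eq_iff hf1 hf) rfl rfl]
  by_cases h_eq : t = u ∧ e = f
  · rw [if_pos (.inl h_eq), if_pos h_eq, h_eq.2]
    split_ifs <;> first | omega | rw [add_zero]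
  by_cases h_mirror : t = u + f - n ∧ e = 2 * n - f
  · rw [if_pos (.inr h_mirror), if_neg h_eq, if_neg (by omega), if_pos h_mirror, h_mirror.2,
      nodeWeight_mirror hf.le, zero_add]
  · rw [if_neg (not_or.2 ⟨h_eq, h_mirror⟩), if_neg h_eq, if_neg h_mirror, ite_self, add_zero,
      mul_zero, mul_zero]

theorem boxBC_nodePos (hadm : Admissible n ι) (hf1 : 1 ≤ f) (hf : f < 2 * n)
    (hidx : 1 ≤ occIdx ι n u f) (he1 : 1 ≤ e) :
    boxBC ι n γ t e (nodePos ι n u f) = nodeWeight n γ f *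
      (((if t = u ∧ e = f then 1 else 0) - if t = u - 1 ∧ e = f + 1 then 1 else 0) +
        if f = n then 0 else (if t = u + f - n ∧ e = 2 * n - f then 1 else 0) -
          if t = u + f - n - 1 ∧ e = 2 * n - f + 1 then 1 else 0) := by
  have shift (u : ℤ) (f : ℕ) : (t + 1 = u ∧ e - 1 = f) ↔ (t = u - 1 ∧ e = f + 1) := by omega
  rw [boxBC, Pi.sub_apply, potential_nodePos hadm hf1 hf hidx, potential_nodePos hadm hf1 hf hidx]
  simp only [shift]
  split_ifs <;> ring

theorem tab_nodePos (hadm : Admissible n ι) (hcol : IsColumn n k j) (hf1 : 1 ≤ f)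
    (hf : f < 2 * n) (hidx : 1 ≤ occIdx ι n u f) :
    tab (boxBC ι n γ) s k j (nodePos ι n u f) = nodeWeight n γ f *
      (exposure s k j u f + if f = n then 0 else exposure s k j (u + f - n) (2 * n - f)) := by
  rw [tab, Finset.sum_apply, Finset.sum_congr rfl fun i hi => boxBC_nodePos hadm hf1 hf hidx
    (hcol.bounds i (Finset.mem_Icc.1 hi).1 (Finset.mem_Icc.1 hi).2).1, ← Finset.mul_sum,
    Finset.sum_add_distrib, Finset.sum_sub_distrib, sum_ite_row, sum_ite_row, ← exposure]
  split_ifs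
  · rw [Finset.sum_const_zero]
  · rw [Finset.sum_sub_distrib, sum_ite_row, sum_ite_row, ← exposure]

end Coefficients

section Closure

variable {n k i e : ℕ} {γ : ℚ} {A : ℕ → ℕ → ℤ} {ι j : ℕ → ℕ} {s t u : ℤ}

theorem nodePos_pos (hadm : Admissible n ι) (he1 : 1 ≤ e) (he : e < 2 * n)
    (hidx : 1 ≤ occIdx ι n t e) : 1 ≤ nodePos ι n t e :=
  occPos_pos (hadm.frequently_eq (foldLetter_pos he1 he) (foldLetter_le n e)) (by omega)

theorem Admissible.exists_eq_nodePos (hadm : Admissible n ι) {q : ℕ} (hq : 1 ≤ q) :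
    ∃ t e, 1 ≤ e ∧ e ≤ n ∧ 1 ≤ occIdx ι n t e ∧ q = nodePos ι n t e := by
  obtain ⟨c, m, hc1, hcn, hm, rfl⟩ := hadm.exists_eq_occPos hq
  have idx : occIdx ι n (m - PABC ι n c) c = m := by rw [occIdx_of_le hcn, sub_add_cancel]
  refine ⟨m - PABC ι n c, c, hc1, hcn, by omega, ?_⟩
  rw [nodePos, idx, foldLetter_of_le hcn, Int.toNat_natCast]

theorem beta_nodePos_of_occIdx_eq_zero (h : occIdx ι n t e = 0) :
    beta A ι (nodePos ι n t e) = 0 := by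
  rw [nodePos, h]
  rfl

theorem Sop_nodePos (hadm : Admissible n ι) (he1 : 1 ≤ e) (he : e < 2 * n)
    (hidx : 1 ≤ occIdx ι n t e) (φ : ℕ → ℚ) :
    Sop A ι (nodePos ι n t e) φ = φ - φ (nodePos ι n t e) •
      beta A ι (nodePos ι n (if 0 < φ (nodePos ι n t e) then t else t - 1) e) := by
  have fc := hadm.frequently_eq (foldLetter_pos he1 he) (foldLetter_le n e)
  have idx_succ : (occIdx ι n t e).toNat = (occIdx ι n (t - 1) e).toNat + 1 := by
    rw [sub_eq_add_neg, occIdx_add]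
    omega
  have kminus_eq : kminus ι (nodePos ι n t e) = nodePos ι n (t - 1) e := by
    rw [nodePos, idx_succ, kminus_occPos_succ fc, nodePos]
  rw [Sop, kminus_eq]
  split_ifs <;> rfl

namespace AdaptedBC

theorem tab_update_succ (h : AdaptedBC n γ A ι) (hi1 : 1 ≤ i) (hik : i ≤ k) (he1 : 1 ≤ e)
    (he : e < 2 * n) (hj : j i = e) (hidx : 1 ≤ occIdx ι n (s + k - i) e) :
    tab (boxBC ι n γ) s k (Function.update j i (e + 1)) =
      tab (boxBC ι n γ) s k j - nodeWeight n γ e • beta A ι (nodePos ι n (s + k - i) e) := by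
  rw [tab_update _ hi1 hik, hj, h.nodeWeight_smul_beta_nodePos he1 he hidx]
  abel

theorem tab_update_pred (h : AdaptedBC n γ A ι) (hi1 : 1 ≤ i) (hik : i ≤ k) (he1 : 1 ≤ e)
    (he : e < 2 * n) (hj : j i = e + 1) (hidx : 1 ≤ occIdx ι n (s + k - i) e) :
    tab (boxBC ι n γ) s k (Function.update j i e) =
      tab (boxBC ι n γ) s k j + nodeWeight n γ e • beta A ι (nodePos ι n (s + k - i) e) := by
  rw [tab_update _ hi1 hik, hj, h.nodeWeight_smul_beta_nodePos he1 he hidx]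
  abel

theorem exists_tab_sub_exposure_smul_beta (h : AdaptedBC n γ A ι) (hcol : IsColumn n k j)
    (he1 : 1 ≤ e) (he : e < 2 * n)
    (hu : u = t ∧ 0 ≤ exposure s k j t e ∨ u = t - 1 ∧ exposure s k j t e ≤ 0)
    (hidx : 0 ≤ occIdx ι n u e) :
    ∃ j', IsColumn n k j' ∧
      tab (boxBC ι n γ) s k j' = tab (boxBC ι n γ) s k j -
        (exposure s k j t e * nodeWeight n γ e) • beta A ι (nodePos ι n u e) ∧
      ∀ t' f, f + 1 ≠ e → f ≠ e → f ≠ e + 1 → exposure s k j' t' f = exposure s k j t' f := by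
  obtain hidx0 | hidx1 := hidx.eq_or_lt
  · exact ⟨j, hcol, by rw [beta_nodePos_of_occIdx_eq_zero hidx0.symm, smul_zero, sub_zero],
      fun _ _ _ _ _ => rfl⟩
  rcases exposure_trichotomy s k j t e with h0 | ⟨hx, i, hi1, hik, ht, hj, hnext⟩ |
    ⟨hx, i, hi1, hik, ht, hj, hprev⟩
  · exact ⟨j, hcol, by rw [h0, zero_mul, zero_smul, sub_zero], fun _ _ _ _ _ => rfl⟩
  · obtain rfl : u = s + k - i := by
      rcases hu with ⟨rfl, -⟩ | ⟨-, hneg⟩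
      · exact ht.symm
      · norm_num [hx] at hneg
    exact ⟨Function.update j i (e + 1), hcol.update_succ hi1 hik hj he hnext,
      by rw [hx, one_mul, h.tab_update_succ hi1 hik he1 he hj hidx1],
      fun _ _ _ _ _ => exposure_update (by omega) (by omega) (by omega) (by omega)⟩
  · obtain rfl : u = s + k - i := by
      rcases hu with ⟨-, hpos⟩ | ⟨rfl, -⟩
      · norm_num [hx] at hpos
      · exact ht.symm
    exact ⟨Function.update j i e, hcol.update_pred hi1 hik he1 hj hprev, by
      rw [hx, neg_one_mul, neg_smul, sub_neg_eq_add, h.tab_update_pred hi1 hik he1 he hj hidx1],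
      fun _ _ _ _ _ => exposure_update (by omega) (by omega) (by omega) (by omega)⟩

end AdaptedBC

theorem exposure_mem (s : ℤ) (k : ℕ) (j : ℕ → ℕ) (t : ℤ) (e : ℕ) :
    exposure s k j t e = 0 ∨ exposure s k j t e = 1 ∨ exposure s k j t e = -1 :=
  (exposure_trichotomy s k j t e).imp_right (Or.imp And.left And.left)

theorem add_eq_zero_or_same_sign {x y : ℚ} (hx : x = 0 ∨ x = 1 ∨ x = -1)
    (hy : y = 0 ∨ y = 1 ∨ y = -1) :
    x + y = 0 ∨ (0 < x + y ∧ 0 ≤ x ∧ 0 ≤ y) ∨ (x + y < 0 ∧ x ≤ 0 ∧ y ≤ 0) := by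
  rcases hx with rfl | rfl | rfl <;> rcases hy with rfl | rfl | rfl <;> norm_num

namespace AdaptedBC

theorem exists_tab_sub_add_exposure_smul_beta (h : AdaptedBC n γ A ι) (hcol : IsColumn n k j)
    (he1 : 1 ≤ e) (he : e < 2 * n) (hen : e ≠ n)
    (hu : u = t ∧ 0 ≤ exposure s k j t e ∧ 0 ≤ exposure s k j (t + e - n) (2 * n - e) ∨
      u = t - 1 ∧ exposure s k j t e ≤ 0 ∧ exposure s k j (t + e - n) (2 * n - e) ≤ 0)
    (hidx : 0 ≤ occIdx ι n u e) :
    ∃ j', IsColumn n k j' ∧ tab (boxBC ι n γ) s k j' = tab (boxBC ι n γ) s k j -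
      ((exposure s k j t e + exposure s k j (t + e - n) (2 * n - e)) * nodeWeight n γ e) •
        beta A ι (nodePos ι n u e) := by
  obtain ⟨j₁, hcol₁, htab₁, hexp₁⟩ := h.exists_tab_sub_exposure_smul_beta hcol he1 he
    (hu.imp (fun h => ⟨h.1, h.2.1⟩) (fun h => ⟨h.1, h.2.1⟩)) hidx
  have mirror_exposure : exposure s k j₁ (t + e - n) (2 * n - e) =
      exposure s k j (t + e - n) (2 * n - e) := hexp₁ _ _ (by omega) (by omega) (by omega)
  obtain ⟨j₂, hcol₂, htab₂, -⟩ := h.exists_tab_sub_exposure_smul_beta (s := s)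
    (u := u + e - n) (t := t + e - n) (e := 2 * n - e) hcol₁ (by omega) (by omega)
    (by
      rw [mirror_exposure]
      exact hu.imp (fun h => ⟨by omega, h.2.2⟩) (fun h => ⟨by omega, h.2.2⟩))
    (by rwa [occIdx_mirror he.le])
  refine ⟨j₂, hcol₂, ?_⟩
  rw [htab₂, htab₁, mirror_exposure, nodePos_mirror he.le, nodeWeight_mirror he.le, add_mul,
    add_smul, sub_sub]

theorem exists_tab_sub_tab_smul_beta (h : AdaptedBC n γ A ι) (hcol : IsColumn n k j)
    (he1 : 1 ≤ e) (he : e < 2 * n) (ht : 1 ≤ occIdx ι n t e)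
    (hu : u = t ∧ 0 ≤ tab (boxBC ι n γ) s k j (nodePos ι n t e) ∨
      u = t - 1 ∧ tab (boxBC ι n γ) s k j (nodePos ι n t e) ≤ 0) :
    ∃ j', IsColumn n k j' ∧ tab (boxBC ι n γ) s k j' = tab (boxBC ι n γ) s k j -
      tab (boxBC ι n γ) s k j (nodePos ι n t e) • beta A ι (nodePos ι n u e) := by
  have w_pos := nodeWeight_pos (n := n) h.pos e
  have hidx : 0 ≤ occIdx ι n u e := by
    rcases hu with ⟨rfl, -⟩ | ⟨rfl, -⟩
    · omega
    · rw [sub_eq_add_neg, occIdx_add]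
      omega
  rw [tab_nodePos h.admissible hcol he1 he ht, mul_comm] at hu ⊢
  have mul_weight_nonpos (x : ℚ) : x * nodeWeight n γ e ≤ 0 ↔ x ≤ 0 := by
    rw [← not_lt, mul_pos_iff_of_pos_right w_pos, not_lt]
  rw [mul_nonneg_iff_of_pos_right w_pos, mul_weight_nonpos] at hu
  rcases eq_or_ne e n with rfl | hen
  · rw [if_pos rfl, add_zero] at hu ⊢
    obtain ⟨j', hcol', htab, -⟩ := h.exists_tab_sub_exposure_smul_beta hcol he1 he hu hidx
    exact ⟨j', hcol', htab⟩
  rw [if_neg hen] at hu ⊢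
  have hval := add_eq_zero_or_same_sign (exposure_mem s k j t e)
    (exposure_mem s k j (t + e - n) (2 * n - e))
  rcases hval with h0 | ⟨hpos, hsign⟩ | ⟨hneg, hsign⟩
  · exact ⟨j, hcol, by rw [h0, zero_mul, zero_smul, sub_zero]⟩
  · exact h.exists_tab_sub_add_exposure_smul_beta hcol he1 he hen
      (.inl ⟨(hu.resolve_right fun h => h.2.not_gt hpos).1, hsign⟩) hidx
  · exact h.exists_tab_sub_add_exposure_smul_beta hcol he1 he hen
      (.inr ⟨(hu.resolve_left fun h => h.2.not_gt hneg).1, hsign⟩) hidx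

theorem exists_tab_eq_Sop (h : AdaptedBC n γ A ι) (hcol : IsColumn n k j) {q : ℕ} (hq : 1 ≤ q) :
    ∃ j', IsColumn n k j' ∧
      tab (boxBC ι n γ) s k j' = Sop A ι q (tab (boxBC ι n γ) s k j) := by
  obtain ⟨t, e, he1, hen, ht, rfl⟩ := h.admissible.exists_eq_nodePos hq
  rw [Sop_nodePos h.admissible he1 (by omega) ht]
  refine h.exists_tab_sub_tab_smul_beta hcol he1 (by omega) ht ?_
  split_ifs with hpos
  · exact .inl ⟨rfl, hpos.le⟩
  · exact .inr ⟨rfl, not_lt.1 hpos⟩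

end AdaptedBC

end Closure

section Reachability

variable {n k i l e : ℕ} {γ : ℚ} {A : ℕ → ℕ → ℤ} {ι j : ℕ → ℕ} {s : ℤ}

theorem PABC_le_and_le_add {c d : ℕ} (h1 : 1 ≤ c) (hcd : c ≤ d) (hd : d ≤ n) :
    PABC ι n c ≤ PABC ι n d ∧ PABC ι n d ≤ PABC ι n c + (d - c) := by
  induction d, hcd using Nat.le_induction with
  | base => exact ⟨le_rfl, Nat.le_add_right _ _⟩
  | succ d hcd ih =>
    have pval_le_one : pval ι (d + 1) d ≤ 1 := by
      unfold pval
      split_ifs <;> omega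
    have := ih (by omega)
    rw [PABC_succ (by omega) hd]
    omega

theorem one_le_occIdx (hi1 : 1 ≤ i) (hik : i ≤ k) (hk : k ≤ n) (hie : i ≤ e) (he : e < 2 * n)
    (hs : 1 - (PABC ι n k : ℤ) ≤ s) : 1 ≤ occIdx ι n (s + k - i) e := by
  have fold_le := foldLetter_le n e
  have fold_pos := foldLetter_pos (n := n) (show 1 ≤ e by omega) he
  unfold occIdx
  rcases le_total k (foldLetter n e) with hkf | hkf
  · have := PABC_le_and_le_add (ι := ι) (by omega) hkf fold_le
    omega
  · have := PABC_le_and_le_add (ι := ι) fold_pos hkf hk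
    unfold foldLetter at this ⊢
    omega

theorem tab_boxBC_id (hk : k < n) :
    tab (boxBC ι n γ) s k id = xsj ι n (s + PABC ι n k) k := by
  have telescope (m : ℕ) : ∑ i ∈ Finset.Icc 1 m, boxBC ι n γ (s + k - i) i =
      potential ι n γ (s + k - m) m := by
    induction m with
    | zero => rw [potential_of_le (Nat.zero_le n), xsj_zero_right, smul_zero]; rfl
    | succ m ih =>
      rw [Finset.sum_Icc_succ_top (by omega), ih, boxBC, Nat.add_sub_cancel,
        show s + k - ((m + 1 : ℕ) : ℤ) + 1 = s + k - m by push_cast; ring, add_sub_cancel]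
  rw [tab]
  simp only [id]
  rw [telescope, add_sub_cancel_right, potential_of_le hk.le, nodeWeight_of_ne hk.ne, one_smul]

/-- The induction measure for reaching a column from `[1,…,k]`. Raising an entry `e` costs
`2 n - e`, which is strictly decreasing in `e`, so that lowering an entry `e + 1` while raising an
entry `2 n - e` decreases the weight whenever `e < n`. -/
def columnWeight (n k : ℕ) (j : ℕ → ℕ) : ℕ :=
  ∑ i ∈ Finset.Icc 1 k, ∑ m ∈ Finset.range (j i), (2 * n - m)

theorem columnWeight_update_succ (hi1 : 1 ≤ i) (hik : i ≤ k) (hj : j i = e) :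
    columnWeight n k (Function.update j i (e + 1)) = columnWeight n k j + (2 * n - e) := by
  have := sum_apply_update_add (fun _ e => ∑ m ∈ Finset.range e, (2 * n - m)) j
    (Finset.mem_Icc.2 ⟨hi1, hik⟩) (e + 1)
  rw [hj, Finset.sum_range_succ] at this
  unfold columnWeight
  omega

theorem columnWeight_update_pred (hi1 : 1 ≤ i) (hik : i ≤ k) (hj : j i = e + 1) :
    columnWeight n k (Function.update j i e) + (2 * n - e) = columnWeight n k j := by
  rw [← columnWeight_update_succ hi1 hik (Function.update_self i e j), Function.update_idem, ← hj,
    Function.update_eq_self]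

theorem tab_update_update_mirror (hi1 : 1 ≤ i) (hik : i ≤ k) (hl1 : 1 ≤ l) (hlk : l ≤ k)
    (hil : i ≠ l) (hli : s + k - l = s + k - i + e - n) (he1 : 1 ≤ e) (he : e < 2 * n)
    (hji : j i = e + 1) (hjl : j l = 2 * n - e) :
    tab (boxBC ι n γ) s k (Function.update (Function.update j i e) l (2 * n - e + 1)) =
      tab (boxBC ι n γ) s k j := by
  rw [tab_update _ hl1 hlk, tab_update _ hi1 hik, Function.update_of_ne hil.symm, hji, hjl, hli,
    sub_add, boxBC_sub_boxBC_succ_mirror he1 he]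
  abel

theorem exposure_update_pred_self (hcol : IsColumn n k j) (hi1 : 1 ≤ i) (hik : i ≤ k)
    (hj : j i = e + 1) : exposure s k (Function.update j i e) (s + k - i) e = 1 := by
  rw [exposure, if_pos ⟨i, hi1, hik, rfl, Function.update_self ..⟩, if_neg, sub_zero]
  rintro ⟨a, -, hak, ha, hja⟩
  obtain rfl : a = i + 1 := by omega
  rw [Function.update_of_ne (by omega)] at hja
  have := hcol.lt_succ i hi1 hak
  omega

namespace AdaptedBC

theorem exists_Sop_tab_update_pred (h : AdaptedBC n γ A ι) (hk : k ≤ n) (hcol : IsColumn n k j)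
    (hcol' : IsColumn n k (Function.update j i e)) (hi1 : 1 ≤ i) (hik : i ≤ k) (hj : j i = e + 1)
    (hs : 1 - (PABC ι n k : ℤ) ≤ s)
    (hmirror : e = n ∨ exposure s k j (s + k - i + e - n) (2 * n - e) = 0) :
    ∃ q, 1 ≤ q ∧
      Sop A ι q (tab (boxBC ι n γ) s k (Function.update j i e)) = tab (boxBC ι n γ) s k j := by
  have hie : i ≤ e := Function.update_self i e j ▸ hcol'.le_apply hi1 hik
  have he : e < 2 * n := by
    have := hcol.bounds i hi1 hik
    omega
  have hidx := one_le_occIdx hi1 hik hk hie he hs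
  have value : tab (boxBC ι n γ) s k (Function.update j i e) (nodePos ι n (s + k - i) e) =
      nodeWeight n γ e := by
    rw [tab_nodePos h.admissible hcol' (by omega) he hidx,
      exposure_update_pred_self hcol hi1 hik hj]
    split_ifs with hen
    · rw [add_zero, mul_one]
    · rw [exposure_update (by omega) (by omega) (by omega) (by omega), hmirror.resolve_left hen,
        add_zero, mul_one]
  refine ⟨_, nodePos_pos h.admissible (by omega) he hidx, ?_⟩
  rw [Sop_nodePos h.admissible (by omega) he hidx, value, if_pos (nodeWeight_pos h.pos e),
    h.tab_update_pred hi1 hik (by omega) he hj hidx, add_sub_cancel_right]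

theorem exists_lighter_of_exposure_eq_zero (h : AdaptedBC n γ A ι) (hk : k ≤ n)
    (hcol : IsColumn n k j) (hi1 : 1 ≤ i) (hik : i ≤ k) (he1 : 1 ≤ e) (hj : j i = e + 1)
    (hprev : 1 < i → j (i - 1) ≠ e) (hs : 1 - (PABC ι n k : ℤ) ≤ s)
    (hmirror : e = n ∨ exposure s k j (s + k - i + e - n) (2 * n - e) = 0) :
    ∃ j', IsColumn n k j' ∧ columnWeight n k j' < columnWeight n k j ∧
      ∃ q, 1 ≤ q ∧ Sop A ι q (tab (boxBC ι n γ) s k j') = tab (boxBC ι n γ) s k j := by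
  have hcol' := hcol.update_pred hi1 hik he1 hj hprev
  refine ⟨_, hcol', ?_, h.exists_Sop_tab_update_pred hk hcol hcol' hi1 hik hj hs hmirror⟩
  have := columnWeight_update_pred (n := n) hi1 hik hj
  have := hcol.bounds i hi1 hik
  omega

end AdaptedBC

theorem IsColumn.exists_lighter_tab_eq (hcol : IsColumn n k j) (hi1 : 1 ≤ i) (hik : i ≤ k)
    (hlk : l ≤ k) (hl : l + e = i + n) (he1 : 1 ≤ e) (he : e < n) (hji : j i = e + 1)
    (hjl : j l = 2 * n - e) (hprev : 1 < i → j (i - 1) ≠ e)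
    (hnext : l < k → j (l + 1) ≠ 2 * n - e + 1) :
    ∃ j', IsColumn n k j' ∧ columnWeight n k j' < columnWeight n k j ∧
      tab (boxBC ι n γ) s k j' = tab (boxBC ι n γ) s k j := by
  have hjl' : Function.update j i e l = 2 * n - e := by rwa [Function.update_of_ne (by omega)]
  have hcol' := hcol.update_pred hi1 hik he1 hji hprev
  refine ⟨Function.update (Function.update j i e) l (2 * n - e + 1),
    hcol'.update_succ (by omega) hlk hjl' (by omega) ?_, ?_,
    tab_update_update_mirror hi1 hik (by omega) hlk (by omega) (by omega) he1 (by omega) hji hjl⟩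
  · rwa [Function.update_of_ne (by omega)]
  · have := columnWeight_update_pred (n := n) hi1 hik hji
    rw [columnWeight_update_succ (by omega) hlk hjl']
    omega

theorem IsColumn.exposure_pred_eq_zero (hcol : IsColumn n k j) (hi1 : 1 ≤ i)
    (hj : j i = e + 1) : exposure s k j (s + k - i - 1) e = 0 := by
  rw [exposure, if_neg, if_neg, sub_zero]
  · rintro ⟨a, -, hak, ha, hja⟩
    have := hcol.lt hi1 (show i < a by omega) hak
    omega
  · rintro ⟨a, -, hak, ha, hja⟩
    have := hcol.lt hi1 (show i < a by omega) hak
    omega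

/-- The entry in row `i` is lowered if nothing at its mirror node interferes; otherwise the entry
at the mirror node is moved, together with row `i` or alone. -/
theorem AdaptedBC.exists_lighter_of_first_row (h : AdaptedBC n γ A ι) (hk : k < n)
    (hcol : IsColumn n k j) (hs : 1 - (PABC ι n k : ℤ) ≤ s) (hi1 : 1 ≤ i) (hik : i ≤ k)
    (hie : i ≤ e) (hji : j i = e + 1) (hbefore : ∀ a, 1 ≤ a → a < i → j a = a) :
    ∃ j', IsColumn n k j' ∧ columnWeight n k j' < columnWeight n k j ∧
      (tab (boxBC ι n γ) s k j' = tab (boxBC ι n γ) s k j ∨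
        ∃ q, 1 ≤ q ∧ Sop A ι q (tab (boxBC ι n γ) s k j') = tab (boxBC ι n γ) s k j) := by
  have he := (hcol.bounds i hi1 hik).2
  have hprev : 1 < i → j (i - 1) ≠ e := fun hlt => by
    rw [hbefore (i - 1) (by omega) (by omega)]
    omega
  by_cases hen : e = n
  · exact (h.exists_lighter_of_exposure_eq_zero hk.le hcol hi1 hik (by omega) hji hprev hs
      (.inl hen)).imp fun _ => And.imp_right (And.imp_right .inr)
  rcases exposure_trichotomy s k j (s + k - i + e - n) (2 * n - e) with
    h0 | ⟨-, l, hl1, hlk, hl, hjl, hnext⟩ | ⟨-, l, hl1, hlk, hl, hjl, hprev'⟩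
  · exact (h.exists_lighter_of_exposure_eq_zero hk.le hcol hi1 hik (by omega) hji hprev hs
      (.inr h0)).imp fun _ => And.imp_right (And.imp_right .inr)
  · have he_lt : e < n := by
      by_contra
      have := hbefore l hl1 (by omega)
      omega
    exact (hcol.exists_lighter_tab_eq hi1 hik hlk (by omega) (by omega) he_lt hji hjl hprev
      hnext).imp fun _ => And.imp_right (And.imp_right .inl)
  · have he_lt : e < n := by
      by_contra
      have : l ≠ i := by
        rintro rfl
        omega
      have := hbefore l hl1 (by omega)
      omega
    have mirror_zero :
        exposure s k j (s + k - l + (2 * n - e : ℕ) - n) (2 * n - (2 * n - e)) = 0 := by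
      rw [show s + k - l + (2 * n - e : ℕ) - n = s + k - i - 1 by omega,
        Nat.sub_sub_self (by omega)]
      exact hcol.exposure_pred_eq_zero hi1 hji
    exact (h.exists_lighter_of_exposure_eq_zero hk.le hcol hl1 hlk (by omega) hjl hprev' hs
      (.inr mirror_zero)).imp fun _ => And.imp_right (And.imp_right .inr)

namespace AdaptedBC

theorem exists_lighter (h : AdaptedBC n γ A ι) (hk : k < n) (hcol : IsColumn n k j)
    (hj : ∃ i, 1 ≤ i ∧ i ≤ k ∧ j i ≠ i) (hs : 1 - (PABC ι n k : ℤ) ≤ s) :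
    ∃ j', IsColumn n k j' ∧ columnWeight n k j' < columnWeight n k j ∧
      (tab (boxBC ι n γ) s k j' = tab (boxBC ι n γ) s k j ∨
        ∃ q, 1 ≤ q ∧ Sop A ι q (tab (boxBC ι n γ) s k j') = tab (boxBC ι n γ) s k j) := by
  classical
  obtain ⟨hi1, hik, hji⟩ := Nat.find_spec hj
  have i_lt : Nat.find hj < j (Nat.find hj) := (hcol.le_apply hi1 hik).lt_of_ne' hji
  refine h.exists_lighter_of_first_row hk hcol hs hi1 hik (e := j (Nat.find hj) - 1) (by omega)
    (by omega) fun a ha1 ha => ?_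
  by_contra hja
  exact Nat.find_min hj ha ⟨ha1, by omega, hja⟩

theorem xiMemFrom_tab (h : AdaptedBC n γ A ι) (hk1 : 1 ≤ k) (hk : k < n) (hcol : IsColumn n k j)
    (hs : 1 - (PABC ι n k : ℤ) ≤ s) :
    XiMemFrom A ι {ψ | ∃ r, 1 ≤ r ∧ ψ = xc (occPos ι k r)} (tab (boxBC ι n γ) s k j) := by
  induction hw : columnWeight n k j using Nat.strong_induction_on generalizing j with
  | _ w ih =>
    by_cases hj : ∃ i, 1 ≤ i ∧ i ≤ k ∧ j i ≠ i
    · obtain ⟨j', hcol', hlt, htab | ⟨q, hq, hSop⟩⟩ := h.exists_lighter hk hcol hj hs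
      · exact htab ▸ ih _ (hw ▸ hlt) hcol' rfl
      · exact hSop ▸ .step q hq _ (ih _ (hw ▸ hlt) hcol' rfl)
    · push Not at hj
      obtain ⟨r, hr⟩ : ∃ r : ℕ, s + PABC ι n k = r := ⟨_, (Int.toNat_of_nonneg (by omega)).symm⟩
      refine .base _ ⟨r, by omega, ?_⟩
      rw [tab_congr fun i hi1 hik t => congrArg (boxBC ι n γ t) (hj i hi1 hik), ← Function.id_def,
        tab_boxBC_id hk, hr, xsj_natCast hk1 hk.le (by omega)]

theorem xiMemFrom_iff (h : AdaptedBC n γ A ι) (hk1 : 1 ≤ k) (hk : k < n) {φ : ℕ → ℚ} :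
    XiMemFrom A ι {ψ | ∃ r, 1 ≤ r ∧ ψ = xc (occPos ι k r)} φ ↔
      ∃ s j, IsColumn n k j ∧ 1 - (PABC ι n k : ℤ) ≤ s ∧ φ = tab (boxBC ι n γ) s k j := by
  refine ⟨fun hφ => ?_, fun ⟨s, j, hcol, hs, hφ⟩ => hφ ▸ h.xiMemFrom_tab hk1 hk hcol hs⟩
  induction hφ with
  | base φ hφ =>
    obtain ⟨r, hr, rfl⟩ := hφ
    refine ⟨r - PABC ι n k, id, ⟨fun i hi1 hik => ⟨hi1, by rw [id]; omega⟩,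
      fun i _ _ => i.lt_succ_self⟩, by omega, ?_⟩
    rw [tab_boxBC_id hk, sub_add_cancel, xsj_natCast hk1 hk.le hr]
  | step q hq φ _ ih =>
    obtain ⟨s, j, hcol, hs, rfl⟩ := ih
    obtain ⟨j', hcol', htab⟩ := h.exists_tab_eq_Sop (s := s) hcol hq
    exact ⟨s, j', hcol', hs, htab.symm⟩

theorem setOf_xiMemFrom_eq (h : AdaptedBC n γ A ι) {box : ℤ → ℕ → ℕ → ℚ}
    (hbox : ∀ t e, 1 ≤ e → e ≤ 2 * n → box t e = boxBC ι n γ t e) (hk1 : 1 ≤ k) (hk : k < n) :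
    {φ | XiMemFrom A ι {ψ | ∃ r, 1 ≤ r ∧ ψ = xc (occPos ι k r)} φ} =
      {T | ∃ (s : ℤ) (j : ℕ → ℕ), (∀ i, 1 ≤ i → i ≤ k → 1 ≤ j i ∧ j i ≤ 2 * n) ∧
        (∀ i, 1 ≤ i → i < k → j i < j (i + 1)) ∧ 1 - (PABC ι n k : ℤ) ≤ s ∧
        T = tab box s k j} := by
  ext φ
  refine (h.xiMemFrom_iff hk1 hk).trans <| exists₂_congr fun s j =>
    ⟨fun ⟨hcol, hs, hφ⟩ => ⟨hcol.bounds, hcol.lt_succ, hs, hφ.trans ?_⟩,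
      fun ⟨hb, hlt, hs, hφ⟩ => ⟨⟨hb, hlt⟩, hs, hφ.trans ?_⟩⟩
  · exact (tab_congr fun i hi1 hik t =>
      hbox t _ (hcol.bounds i hi1 hik).1 (hcol.bounds i hi1 hik).2).symm
  · exact tab_congr fun i hi1 hik t => hbox t _ (hb i hi1 hik).1 (hb i hi1 hik).2

end AdaptedBC

end Reachability

/-- Lemma 5.4: in types B and C, for `k ∈ [1,n-1]`, the forms obtained from the `x_{r,k}`
(`r ≥ 1`) by the operators `S_l` are exactly the `k`-row tableaux all of whose entries lie
in `J_X` (entries encoded in `[1,2n]`, so in type C no entry equals `ovl(n+1)`). -/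
theorem xi_from_xrk_BC (n : ℕ) (hn : 2 ≤ n) (ι : ℕ → ℕ) (hadm : Admissible n ι) :
    (Adapted n (cartanB n) ι → ∀ k, 1 ≤ k → k ≤ n - 1 →
      { φ : ℕ → ℚ |
          XiMemFrom (cartanB n) ι { ψ | ∃ r, 1 ≤ r ∧ ψ = xc (occPos ι k r) } φ } =
      { T : ℕ → ℚ | ∃ (s : ℤ) (j : ℕ → ℕ),
          (∀ i, 1 ≤ i → i ≤ k → 1 ≤ j i ∧ j i ≤ 2 * n) ∧
          (∀ i, 1 ≤ i → i < k → j i < j (i + 1)) ∧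
          1 - (PABC ι n k : ℤ) ≤ s ∧
          T = tab (boxB ι n) s k j }) ∧
    (Adapted n (cartanC n) ι → ∀ k, 1 ≤ k → k ≤ n - 1 →
      { φ : ℕ → ℚ |
          XiMemFrom (cartanC n) ι { ψ | ∃ r, 1 ≤ r ∧ ψ = xc (occPos ι k r) } φ } =
      { T : ℕ → ℚ | ∃ (s : ℤ) (j : ℕ → ℕ),
          (∀ i, 1 ≤ i → i ≤ k → 1 ≤ j i ∧ j i ≤ 2 * n) ∧
          (∀ i, 1 ≤ i → i < k → j i < j (i + 1)) ∧
          1 - (PABC ι n k : ℤ) ≤ s ∧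
          T = tab (boxC ι n) s k j }) :=
  ⟨fun had _ hk1 hk => (adaptedBC_cartanB hadm had).setOf_xiMemFrom_eq
      (fun _ _ => boxB_eq_boxBC) hk1 (by omega),
    fun had _ hk1 hk => (adaptedBC_cartanC hadm had).setOf_xiMemFrom_eq
      (fun _ _ => boxC_eq_boxBC) hk1 (by omega)⟩
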